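/- arXiv:2412.19889 — 4 statements merged into one kernel-verified Lean document; each statement's English description precedes it below -/
import Mathlib

section
/- Let n ≥ 1, let R > 0 (possibly R = ∞ handled by taking R any positive real; here assume R : ℝ, R > 0), let c : ℕ → ℝ and g : ℝ → ℝ be such that for every t with |t| < R the series ∑_k c k · t^k converges to g t (HasSum (fun k ↦ c k * t^k) (g t)). Let a x : Fin n → ℝ satisfy |a j| · |x i| < R for all i, j. Then the family indexed by strictly decreasing tuples k : Fin n → ℕ, with term (∏_{l} c (k l)) · D(a, k) · D(x, k), has sum equal to det of the n×n matrix with (i,j) entry g (a j * x i). (This is the determinant form of Theorem 1: det M_G(X) = Σ_λ (G_λ/C_λ) s_λ(a) s_λ(x) · V(a) V(x), using the bialternant formula, since c k = g^{(k)}(0)/k!.) -/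
/-!
The identity is a Cauchy–Binet formula with infinite inner index: the matrix `g (a j * x i)` is the
product of the `n × ∞` matrix `c k * x i ^ k` and the `∞ × n` matrix `a j ^ k`, so its determinant
is the sum of the products of their maximal minors. As for finite matrices, multilinearity expands
the determinant over all tuples `k`, the tuples with a repeated entry contribute zero, and every
other tuple is a unique rearrangement of a strictly decreasing one; the sum over rearrangements
produces the second minor. Absolute convergence justifies expanding products of series.
-/

open Equiv Filter Function Matrix

section ProductOfSeries

variable {ι : Type*} [Fintype ι] {κ : ι → Type*}

theorem hasSum_prod_pi {R : Type*} [CommSemiring R] [TopologicalSpace R] [ContinuousMul R]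
    [T2Space R] {f : ∀ i, κ i → R} {s : ι → R} (hf : ∀ i, HasSum (f i) (s i))
    (hprod : Summable fun k : ∀ i, κ i => ∏ i, f i (k i)) :
    HasSum (fun k : ∀ i, κ i => ∏ i, f i (k i)) (∏ i, s i) := by
  classical
  -- Boxes are cofinal among the finite sets of tuples, and the partial sums over boxes factor.
  have hbox : Tendsto (Fintype.piFinset (δ := κ)) atTop atTop :=
    tendsto_atTop_finset_of_monotone Fintype.piFinset_subset fun k => ⟨fun i => {k i}, by simp⟩
  have hside (i : ι) : Tendsto (eval i : (∀ i, Finset (κ i)) → Finset (κ i)) atTop atTop :=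
    (monotone_eval i).tendsto_atTop_atTop fun t => (surjective_eval i t).imp fun _ h => h.ge
  have hlim := tendsto_finsetProd Finset.univ fun i _ => (hf i).comp (hside i)
  simp only [comp_def, eval, Finset.prod_univ_sum] at hlim
  exact tendsto_nhds_unique (hprod.hasSum.comp hbox) hlim ▸ hprod.hasSum

theorem summable_prod_pi_of_nonneg {f : ∀ i, κ i → ℝ} (hnonneg : ∀ i k, 0 ≤ f i k)
    (hf : ∀ i, Summable (f i)) : Summable fun k : ∀ i, κ i => ∏ i, f i (k i) := by
  classical
  refine summable_of_sum_le (c := ∏ i, ∑' k, f i k)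
    (fun k => Finset.prod_nonneg fun i _ => hnonneg i _) fun u => ?_
  calc ∑ k ∈ u, ∏ i, f i (k i)
      ≤ ∑ k ∈ Fintype.piFinset fun i => u.image (eval i), ∏ i, f i (k i) :=
        Finset.sum_le_sum_of_subset_of_nonneg
          (fun k hk => Fintype.mem_piFinset.2 fun i => Finset.mem_image_of_mem _ hk)
          fun k _ _ => Finset.prod_nonneg fun i _ => hnonneg i _
    _ = ∏ i, ∑ k ∈ u.image (eval i), f i k := (Finset.prod_univ_sum _ _).symm
    _ ≤ ∏ i, ∑' k, f i k :=
        Finset.prod_le_prod (fun i _ => Finset.sum_nonneg fun k _ => hnonneg i k)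
          fun i _ => (hf i).sum_le_tsum _ fun k _ => hnonneg i k

theorem summable_prod_pi_of_summable_norm {R : Type*} [NormedCommRing R] [CompleteSpace R]
    {f : ∀ i, κ i → R} (hf : ∀ i, Summable fun k => ‖f i k‖) :
    Summable fun k : ∀ i, κ i => ∏ i, f i (k i) := by
  -- The empty product is treated apart because `‖1‖ ≤ 1` may fail in `R`.
  cases isEmpty_or_nonempty ι
  · exact (hasSum_fintype _).summable
  · exact (summable_prod_pi_of_nonneg (fun _ _ => norm_nonneg _) hf).of_norm_bounded
      fun k => Finset.norm_prod_le' _ Finset.univ_nonempty _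

end ProductOfSeries

section StrictAntiTuples

variable {n : ℕ} {ι : Type*}

theorem injective_strictAnti_comp_perm [Preorder ι] :
    Injective fun p : {k : Fin n → ι // StrictAnti k} × Perm (Fin n) => p.1.1 ∘ p.2 := by
  rintro ⟨⟨k, hk⟩, σ⟩ ⟨⟨l, hl⟩, τ⟩ (h : k ∘ σ = l ∘ τ)
  obtain rfl : k = l := by
    rw [← hk.range_inj hl, ← σ.surjective.range_comp k, h, τ.surjective.range_comp]
  obtain rfl : σ = τ := Equiv.ext fun i => hk.injective (congrFun h i)
  rfl

theorem exists_strictAnti_comp_perm_eq [LinearOrder ι] {k : Fin n → ι} (hk : Injective k) :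
    ∃ (l : Fin n → ι) (σ : Perm (Fin n)), StrictAnti l ∧ l ∘ σ = k := by
  let τ := Tuple.sort (OrderDual.toDual ∘ k)
  have hanti : Antitone (k ∘ τ) := Tuple.monotone_sort (OrderDual.toDual ∘ k)
  exact ⟨k ∘ τ, τ.symm, hanti.strictAnti_of_injective (hk.comp τ.injective), by ext; simp⟩

theorem hasSum_strictAnti_sum_perm [LinearOrder ι] {M : Type*} [AddCommMonoid M]
    [TopologicalSpace M] [ContinuousAdd M] [RegularSpace M] {F : (Fin n → ι) → M} {s : M}
    (hF : ∀ k, ¬ Injective k → F k = 0) (hs : HasSum F s) :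
    HasSum (fun k : {k : Fin n → ι // StrictAnti k} => ∑ σ : Perm (Fin n), F (k.1 ∘ σ)) s := by
  have hsupp : ∀ k ∉ Set.range fun p : {k : Fin n → ι // StrictAnti k} × Perm (Fin n) =>
      p.1.1 ∘ p.2, F k = 0 := by
    refine fun k hk => hF k fun hinj => hk ?_
    obtain ⟨l, σ, hl, hlσ⟩ := exists_strictAnti_comp_perm_eq hinj
    exact ⟨(⟨l, hl⟩, σ), hlσ⟩
  exact ((injective_strictAnti_comp_perm.hasSum_iff hsupp).2 hs).prod_fiberwise
    fun k => hasSum_fintype _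

end StrictAntiTuples

section CauchyBinet

theorem sum_perm_prod_mul_det_submatrix {m R : Type*} [Fintype m] [DecidableEq m] [CommRing R]
    (A B : Matrix m m R) :
    ∑ σ : Perm m, (∏ j, B j (σ j)) * (A.submatrix id σ).det = A.det * B.det := by
  rw [← det_transpose B, det_apply' Bᵀ, Finset.mul_sum]
  refine Finset.sum_congr rfl fun σ _ => ?_
  simp only [det_permute', transpose_apply]
  ring

variable {R : Type*} [NormedCommRing R] [CompleteSpace R]

theorem hasSum_det_of_summable_norm {m : Type*} [Fintype m] [DecidableEq m] {κ : m → Type*}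
    {f : m → ∀ j, κ j → R} {M : Matrix m m R} (hf : ∀ i j, Summable fun k => ‖f i j k‖)
    (hM : ∀ i j, HasSum (f i j) (M i j)) :
    HasSum (fun k : ∀ j, κ j => (of fun i j => f i j (k j)).det) M.det := by
  simp only [det_apply', of_apply]
  exact hasSum_sum fun σ _ => (hasSum_prod_pi (fun j => hM (σ j) j)
    (summable_prod_pi_of_summable_norm fun j => hf (σ j) j)).mul_left _

theorem hasSum_det_submatrix_mul_det_submatrix {n : ℕ} {ι : Type*} [LinearOrder ι]
    {A B : Matrix (Fin n) ι R} {M : Matrix (Fin n) (Fin n) R}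
    (hAB : ∀ i j, Summable fun k => ‖A i k * B j k‖)
    (hM : ∀ i j, HasSum (fun k => A i k * B j k) (M i j)) :
    HasSum (fun k : {k : Fin n → ι // StrictAnti k} =>
      (A.submatrix id k.1).det * (B.submatrix id k.1).det) M.det := by
  have htuples : HasSum
      (fun k : Fin n → ι => (∏ j, B j (k j)) * (A.submatrix id k).det) M.det := by
    refine (hasSum_det_of_summable_norm hAB hM).congr_fun fun k => ?_
    rw [← det_mul_row]
    simp only [submatrix_apply, id, mul_comm]
  have hrepeated : ∀ k : Fin n → ι, ¬ Injective k →
      (∏ j, B j (k j)) * (A.submatrix id k).det = 0 := by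
    intro k hk
    obtain ⟨i, j, hij, hne⟩ := not_injective_iff.1 hk
    rw [det_zero_of_column_eq hne fun r => by simp [hij], mul_zero]
  exact (hasSum_strictAnti_sum_perm hrepeated htuples).congr_fun fun k =>
    (sum_perm_prod_mul_det_submatrix (A.submatrix id k.1) (B.submatrix id k.1)).symm

end CauchyBinet

theorem cauchy_type_identity_general_general {R : Type*} [NormedCommRing R] [CompleteSpace R]
    {n : ℕ} {c : ℕ → R} {g : R → R} {a x : Fin n → R}
    (hc : ∀ i j, Summable fun k : ℕ => ‖c k * (a j * x i) ^ k‖)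
    (hg : ∀ i j, HasSum (fun k : ℕ => c k * (a j * x i) ^ k) (g (a j * x i))) :
    HasSum
      (fun k : {k : Fin n → ℕ // StrictAnti k} =>
        (∏ l, c (k.1 l)) * (of fun i j => a i ^ k.1 j).det * (of fun i j => x i ^ k.1 j).det)
      (of fun i j => g (a j * x i)).det := by
  have hfactor (i j : Fin n) (k : ℕ) : c k * (a j * x i) ^ k = c k * x i ^ k * a j ^ k := by
    ring
  simp only [hfactor] at hc hg
  refine (hasSum_det_submatrix_mul_det_submatrix (A := of fun i k => c k * x i ^ k)
    (B := of fun j k => a j ^ k) hc hg).congr_fun fun k => ?_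
  rw [mul_right_comm, ← det_mul_row]
  rfl

theorem cauchy_type_identity_general
    (n : ℕ) (hn : 1 ≤ n) (R : ℝ) (hR : 0 < R)
    (c : ℕ → ℝ) (g : ℝ → ℝ)
    (hg : ∀ t : ℝ, |t| < R → HasSum (fun k : ℕ => c k * t ^ k) (g t))
    (a x : Fin n → ℝ)
    (hax : ∀ i j : Fin n, |a j| * |x i| < R) :
    HasSum
      (fun k : {k : Fin n → ℕ // StrictAnti k} =>
        (∏ l : Fin n, c (k.1 l)) *
          (Matrix.of fun i j : Fin n => (a i) ^ (k.1 j)).det *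
          (Matrix.of fun i j : Fin n => (x i) ^ (k.1 j)).det)
      (Matrix.of fun i j : Fin n => g (a j * x i)).det := by
  have hsum (i j : Fin n) := hg (a j * x i) (by rw [abs_mul]; exact hax i j)
  exact cauchy_type_identity_general_general (fun i j => (hsum i j).summable.norm) hsum
end

section
/- Let n ≥ 1 and let a x : Fin n → ℝ satisfy a j * x i ≠ 1 for all i, j. Then the determinant of the n×n matrix with (i,j) entry 1/(1 - a j * x i) equals (∏_{i<j} (a j - a i)) · (∏_{i<j} (x j - x i)) · ∏_{i,j} (1 - a i * x j)⁻¹. (Variant of the classical Cauchy determinant identity used in Example 2.) -/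
/-!
Eliminate with the pivot in the top left corner. By the scalar identity
`(1 - a y) (1 - b x) - (1 - a x) (1 - b y) = (y - x) (b - a)`,
the Schur complement of a Cauchy matrix is again a Cauchy matrix, on the remaining parameters, with
its rows and columns rescaled. The determinant formula follows by induction on the size.
-/

section CauchyDeterminant

variable {K : Type*} [Field K] {n : ℕ}

theorem det_succ_eq_mul_det_schur_complement (A : Matrix (Fin (n + 1)) (Fin (n + 1)) K)
    (hA : A 0 0 ≠ 0) :
    A.det = A 0 0 *
      (Matrix.of fun i j : Fin n => A i.succ j.succ - A i.succ 0 / A 0 0 * A 0 j.succ).det := by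
  let c : Fin (n + 1) → K := Fin.cons 0 fun i => A i.succ 0 / A 0 0
  let B : Matrix (Fin (n + 1)) (Fin (n + 1)) K := Matrix.of fun i j => A i j - c i * A 0 j
  have row_zero (j : Fin (n + 1)) : B 0 j = A 0 j := by simp [B, c]
  have column_zero (i : Fin n) : B i.succ 0 = 0 := by simp [B, c, hA]
  have det_eq : A.det = B.det :=
    Matrix.det_eq_of_forall_row_eq_smul_add_const c 0 rfl fun i j => by
      rw [row_zero]
      exact (sub_add_cancel _ _).symm
  rw [det_eq, Matrix.det_succ_column_zero, Fin.sum_univ_succ]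
  simp only [column_zero, row_zero, mul_zero, zero_mul, Finset.sum_const_zero, add_zero,
    Fin.val_zero, pow_zero, one_mul]
  rfl

theorem schur_complement_one_div_one_sub_mul {a b x y : K} (hax : a * x ≠ 1) (hay : a * y ≠ 1)
    (hbx : b * x ≠ 1) (hby : b * y ≠ 1) :
    1 / (1 - b * y) - 1 / (1 - a * y) / (1 / (1 - a * x)) * (1 / (1 - b * x)) =
      (y - x) / (1 - a * y) * ((b - a) / (1 - b * x) * (1 / (1 - b * y))) := by
  have cross_difference :
      (1 - a * y) * (1 - b * x) - (1 - a * x) * (1 - b * y) = (y - x) * (b - a) := by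
    ring
  replace hax : 1 - a * x ≠ 0 := sub_ne_zero.mpr hax.symm
  replace hay : 1 - a * y ≠ 0 := sub_ne_zero.mpr hay.symm
  replace hbx : 1 - b * x ≠ 0 := sub_ne_zero.mpr hbx.symm
  replace hby : 1 - b * y ≠ 0 := sub_ne_zero.mpr hby.symm
  -- As atoms, the four denominators are cleared without being expanded.
  generalize 1 - a * x = p, 1 - a * y = q, 1 - b * x = r, 1 - b * y = s at *
  field_simp
  linear_combination cross_difference

theorem det_one_div_one_sub_mul_succ (a x : Fin (n + 1) → K) (hax : ∀ i j, a j * x i ≠ 1) :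
    (Matrix.of fun i j => 1 / (1 - a j * x i)).det =
      1 / (1 - a 0 * x 0) *
        ((∏ i : Fin n, (x i.succ - x 0) / (1 - a 0 * x i.succ)) *
          ((∏ j : Fin n, (a j.succ - a 0) / (1 - a j.succ * x 0)) *
            (Matrix.of fun i j : Fin n => 1 / (1 - a j.succ * x i.succ)).det)) := by
  have pivot_ne_zero : 1 / (1 - a 0 * x 0) ≠ 0 :=
    one_div_ne_zero (sub_ne_zero.mpr (hax 0 0).symm)
  rw [det_succ_eq_mul_det_schur_complement _ pivot_ne_zero, ← Matrix.det_mul_row,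
    ← Matrix.det_mul_column]
  congr 2
  ext i j
  exact schur_complement_one_div_one_sub_mul (hax 0 0) (hax i.succ 0) (hax 0 j.succ)
    (hax i.succ j.succ)

theorem cauchy_determinant_identity_variant_general (a x : Fin n → K)
    (hax : ∀ i j, a j * x i ≠ 1) :
    (Matrix.of fun i j => 1 / (1 - a j * x i)).det =
      (∏ i, ∏ j ∈ Finset.Ioi i, (a j - a i)) * (∏ i, ∏ j ∈ Finset.Ioi i, (x j - x i)) *
        ∏ i, ∏ j, (1 - a i * x j)⁻¹ := by
  induction n with
  | zero => simp
  | succ n ih =>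
    rw [det_one_div_one_sub_mul_succ a x hax,
      ih (fun i => a i.succ) (fun i => x i.succ) fun i j => hax i.succ j.succ]
    simp only [Fin.prod_univ_succ, Fin.prod_Ioi_zero, Fin.prod_Ioi_succ, div_eq_mul_inv,
      Finset.prod_mul_distrib]
    ring

end CauchyDeterminant

theorem cauchy_determinant_identity_variant
    (n : ℕ) (hn : 1 ≤ n) (a x : Fin n → ℝ)
    (hax : ∀ i j : Fin n, a j * x i ≠ 1) :
    (Matrix.of fun i j : Fin n => 1 / (1 - a j * x i)).det =
      (∏ i : Fin n, ∏ j ∈ Finset.Ioi i, (a j - a i)) *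
        (∏ i : Fin n, ∏ j ∈ Finset.Ioi i, (x j - x i)) *
        ∏ i : Fin n, ∏ j : Fin n, (1 - a i * x j)⁻¹ :=
  cauchy_determinant_identity_variant_general a x hax
end

section
/- Let R be a commutative ring, n ≥ 1, m : ℕ, b : ℕ → R, and a x : Fin n → R. Define the n×n matrix M with (i,j) entry ∑_{k=0}^{m} b k · (a j * x i)^k. Then det M = ∑ over strictly decreasing tuples k : Fin n → ℕ with k 0 ≤ m (equivalently, all values ≤ m) of (∏_{l} b (k l)) · D(a, k) · D(x, k). (Determinant form of the polynomial example: the Cauchy-type sum is finite and truncates at partitions with λ_1 ≤ m − n + 1.) -/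
/-!
The matrix factors as `X * diag(b) * A` with rectangular `X` and `A`, so the identity is an instance
of the Cauchy–Binet formula. Expanding the determinant of a product by multilinearity gives a sum
over all tuples of inner indices. A tuple with a repetition contributes a determinant with two equal
columns, and an injective tuple is a rearrangement `k ∘ σ` of exactly one strictly decreasing `k`;
for fixed `k`, the sum over `σ` is the Leibniz expansion of the minor of the second factor.
-/

section Tuples

variable {κ : Type*} {n : ℕ}

open scoped Classical in
/-- The strictly decreasing `n`-tuples with entries in `s`. For a linear order they correspond to
the `n`-element subsets of `s`, so they index the maximal minors in the Cauchy–Binet formula. -/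
noncomputable def strictAntiTuples [Preorder κ] (n : ℕ) (s : Finset κ) : Finset (Fin n → κ) :=
  {k ∈ Fintype.piFinset fun _ => s | StrictAnti k}

theorem mem_strictAntiTuples [Preorder κ] {s : Finset κ} {k : Fin n → κ} :
    k ∈ strictAntiTuples n s ↔ StrictAnti k ∧ ∀ l, k l ∈ s := by
  simp only [strictAntiTuples, Finset.mem_filter, Fintype.mem_piFinset, and_comm]

theorem exists_perm_strictAnti_comp [LinearOrder κ] {p : Fin n → κ}
    (hp : Function.Injective p) : ∃ σ : Equiv.Perm (Fin n), StrictAnti (p ∘ σ) := by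
  have hsort : StrictMono (p ∘ Tuple.sort p) :=
    (Tuple.monotone_sort p).strictMono_of_injective (hp.comp (Tuple.sort p).injective)
  exact ⟨Fin.revPerm.trans (Tuple.sort p), hsort.comp_strictAnti Fin.rev_strictAnti⟩

theorem eq_and_eq_of_strictAnti_comp_perm_eq [PartialOrder κ] {k k' : Fin n → κ}
    (hk : StrictAnti k) (hk' : StrictAnti k') {σ σ' : Equiv.Perm (Fin n)}
    (h : k ∘ σ = k' ∘ σ') : k = k' ∧ σ = σ' := by
  have hrange : Set.range k = Set.range k' := by
    rw [← σ.surjective.range_comp k, h, σ'.surjective.range_comp]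
  obtain rfl : k = k' := (hk.range_inj hk').1 hrange
  exact ⟨rfl, Equiv.ext fun i => hk.injective (congrFun h i)⟩

theorem sum_injective_eq_sum_strictAntiTuples_sum_perm [LinearOrder κ] {M : Type*}
    [AddCommMonoid M] (s : Finset κ) (F : (Fin n → κ) → M) :
    ∑ p ∈ Fintype.piFinset (fun _ : Fin n => s) with Function.Injective p, F p =
      ∑ k ∈ strictAntiTuples n s, ∑ σ : Equiv.Perm (Fin n), F (k ∘ σ) := by
  rw [← Finset.sum_product']
  symm
  refine Finset.sum_bij (fun q _ => q.1 ∘ q.2) ?maps_to ?injective ?surjective fun _ _ => rfl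
  all_goals simp only [Finset.mem_product, Finset.mem_univ, and_true, mem_strictAntiTuples,
    Finset.mem_filter, Fintype.mem_piFinset]
  case maps_to =>
    rintro ⟨k, σ⟩ ⟨hk, hks⟩
    exact ⟨fun i => hks (σ i), hk.injective.comp σ.injective⟩
  case injective =>
    rintro ⟨k, σ⟩ ⟨hk, -⟩ ⟨k', σ'⟩ ⟨hk', -⟩ h
    exact Prod.ext_iff.2 (eq_and_eq_of_strictAnti_comp_perm_eq hk hk' h)
  case surjective =>
    rintro p ⟨hps, hp⟩
    obtain ⟨σ, hσ⟩ := exists_perm_strictAnti_comp hp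
    exact ⟨(p ∘ σ, σ.symm), ⟨hσ, fun i => hps (σ i)⟩, by simp [Function.comp_assoc]⟩

end Tuples

section CauchyBinet

variable {ι κ R : Type*} [Fintype ι] [DecidableEq ι] [CommRing R]

theorem det_sum_mul_eq_sum_piFinset (s : Finset κ) (A : Matrix ι κ R) (B : Matrix κ ι R) :
    (Matrix.of fun i j => ∑ k ∈ s, A i k * B k j).det =
      ∑ p ∈ Fintype.piFinset (fun _ : ι => s), (A.submatrix id p).det * ∏ j, B (p j) j := by
  simp only [Matrix.det_apply', Matrix.of_apply, Matrix.submatrix_apply, id_eq,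
    Finset.prod_univ_sum, Finset.prod_mul_distrib, Finset.mul_sum, Finset.sum_mul, mul_assoc]
  exact Finset.sum_comm

theorem det_submatrix_id_eq_zero_of_not_injective (A : Matrix ι κ R) {p : ι → κ}
    (hp : ¬ Function.Injective p) : (A.submatrix id p).det = 0 := by
  obtain ⟨i, j, hij, hne⟩ := Function.not_injective_iff.1 hp
  exact Matrix.det_zero_of_column_eq hne fun l => congrArg (A l) hij

theorem sum_perm_det_submatrix_mul_prod (A : Matrix ι κ R) (B : Matrix κ ι R) (k : ι → κ) :
    ∑ σ : Equiv.Perm ι, (A.submatrix id (k ∘ σ)).det * ∏ j, B ((k ∘ σ) j) j =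
      (A.submatrix id k).det * (B.submatrix k id).det := by
  have hsign (σ : Equiv.Perm ι) : (A.submatrix id (k ∘ σ)).det =
      Equiv.Perm.sign σ * (A.submatrix id k).det :=
    Matrix.det_permute' σ (A.submatrix id k)
  rw [Matrix.det_apply' (B.submatrix k id), Finset.mul_sum]
  refine Finset.sum_congr rfl fun σ _ => ?_
  rw [hsign, mul_comm (Equiv.Perm.sign σ : R), mul_assoc]
  rfl

theorem det_sum_mul_eq_sum_strictAntiTuples [LinearOrder κ] {n : ℕ} (s : Finset κ)
    (A : Matrix (Fin n) κ R) (B : Matrix κ (Fin n) R) :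
    (Matrix.of fun i j => ∑ k ∈ s, A i k * B k j).det =
      ∑ k ∈ strictAntiTuples n s, (A.submatrix id k).det * (B.submatrix k id).det := by
  have hinj (p : Fin n → κ) (hne : (A.submatrix id p).det * ∏ j, B (p j) j ≠ 0) :
      Function.Injective p :=
    not_imp_comm.1 (det_submatrix_id_eq_zero_of_not_injective A) (left_ne_zero_of_mul hne)
  rw [det_sum_mul_eq_sum_piFinset, ← Finset.sum_filter_of_ne fun p _ => hinj p,
    sum_injective_eq_sum_strictAntiTuples_sum_perm]
  simp only [sum_perm_det_submatrix_mul_prod]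

end CauchyBinet

theorem polynomial_cauchy_type_identity
    (R : Type*) [CommRing R] (n : ℕ) (hn : 1 ≤ n) (m : ℕ)
    (b : ℕ → R) (a x : Fin n → R) :
    (Matrix.of fun i j : Fin n =>
        ∑ k ∈ Finset.range (m + 1), b k * (a j * x i) ^ k).det =
      ∑ᶠ (k : Fin n → ℕ) (_ : StrictAnti k ∧ ∀ l : Fin n, k l ≤ m),
        (∏ l : Fin n, b (k l)) *
          (Matrix.of fun i j : Fin n => (a i) ^ (k j)).det *
          (Matrix.of fun i j : Fin n => (x i) ^ (k j)).det := by
  let X : Matrix (Fin n) ℕ R := .of fun i k => x i ^ k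
  let B : Matrix ℕ (Fin n) R := .of fun k j => b k * a j ^ k
  have hfactor (i j : Fin n) (k : ℕ) : b k * (a j * x i) ^ k = X i k * B k j := by
    simp only [X, B, Matrix.of_apply]
    ring
  have hminor (k : Fin n → ℕ) : (B.submatrix k id).det =
      (∏ l, b (k l)) * (Matrix.of fun i j : Fin n => a i ^ k j).det := by
    rw [← Matrix.det_transpose (Matrix.of _)]
    exact Matrix.det_mul_column (fun l => b (k l)) (Matrix.of fun i j => a i ^ k j).transpose
  have hindex (k : Fin n → ℕ) : (StrictAnti k ∧ ∀ l, k l ≤ m) ↔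
      k ∈ strictAntiTuples n (Finset.range (m + 1)) := by
    simp only [mem_strictAntiTuples, Finset.mem_range, Nat.lt_succ_iff]
  simp only [hfactor, hindex, finsum_mem_finset_eq_sum]
  rw [det_sum_mul_eq_sum_strictAntiTuples]
  refine Finset.sum_congr rfl fun k _ => ?_
  rw [hminor, mul_comm]
  rfl
end

section
/- Let R be a commutative ring, n ≥ 1, and let μ : Fin n → ℕ be strictly decreasing (μ i > μ j for i < j). For any a x : Fin n → R, the determinant of the n×n matrix with (i,j) entry ∑_{l : Fin n} (a j * x i)^(μ l) equals D(a, μ) · D(x, μ), i.e. det((a i)^(μ j)) · det((x i)^(μ j)). (Determinant form of identity (4): s_μ'(a) s_μ'(x) · V(a) V(x) = det(P_j(x_i)) for g(x) = x^{μ_1} + ⋯ + x^{μ_n}.) -/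
open Matrix

/-- The generalized Vandermonde matrix with nodes `x` and exponents `k`. For a square matrix its
determinant is the alternant `D(x, k)`; nodes and exponents may be indexed by different types. -/
def generalizedVandermonde {R ι κ : Type*} [Monoid R] (x : ι → R) (k : κ → ℕ) : Matrix ι κ R :=
  Matrix.of fun i j => x i ^ k j

theorem generalizedVandermonde_mul_transpose {R ι ι' κ : Type*} [CommSemiring R] [Fintype κ]
    (x : ι → R) (a : ι' → R) (k : κ → ℕ) :
    generalizedVandermonde x k * (generalizedVandermonde a k)ᵀ =
      Matrix.of fun i j => ∑ l, (a j * x i) ^ k l := by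
  ext i j
  calc ∑ l, x i ^ k l * a j ^ k l
    _ = ∑ l, (a j * x i) ^ k l :=
      Finset.sum_congr rfl fun l _ => by rw [mul_pow, mul_comm]

theorem single_partition_cauchy_type_identity_general {R ι : Type*} [CommRing R] [Fintype ι]
    [DecidableEq ι] (k : ι → ℕ) (a x : ι → R) :
    (Matrix.of fun i j => ∑ l, (a j * x i) ^ k l).det =
      (generalizedVandermonde a k).det * (generalizedVandermonde x k).det := by
  rw [← generalizedVandermonde_mul_transpose, det_mul, det_transpose, mul_comm]

theorem single_partition_cauchy_type_identity
    (R : Type*) [CommRing R] (n : ℕ) (hn : 1 ≤ n)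
    (μ : Fin n → ℕ) (hμ : StrictAnti μ) (a x : Fin n → R) :
    (Matrix.of fun i j : Fin n =>
        ∑ l : Fin n, (a j * x i) ^ (μ l)).det =
      (Matrix.of fun i j : Fin n => (a i) ^ (μ j)).det *
        (Matrix.of fun i j : Fin n => (x i) ^ (μ j)).det :=
  single_partition_cauchy_type_identity_general μ a x
end
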